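/- Let R be a commutative Noetherian ring, M an R-module (not necessarily finitely generated), and let S be a Serre subcategory of the category of R-modules. Let I and J be two ideals of R with c = cd(I,M), and let t be a positive integer. Suppose that H^{t+i}_J(H^{c−i}_I(M)) belongs to S for all i with 0 < i ≤ c, and that H^{t+c}_{I+J}(M) does not belong to S. Then H^t_J(H^c_I(M)) does not belong to S. -/

import Mathlib

universe u

open CategoryTheory

/-- The cohomological dimension of `M` with respect to `I`:
`cd(I,M) = sup { i ∈ ℕ | H^i_I(M) ≠ 0 }`, as an element of `ℕ∞`. -/
noncomputable def cohomologicalDimension {R : Type u} [CommRing R] (I : Ideal R)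
    (M : ModuleCat.{u} R) : ℕ∞ :=
  sSup {c : ℕ∞ | ∃ i : ℕ, c = i ∧ Nontrivial ((localCohomology I i).obj M)}

open Limits Opposite

namespace CategoryTheory.NatTrans

section LeftDerivedSequence

variable {C D : Type*} [Category* C] [Category* D] [Abelian C] [Abelian D]
  {F G H : C ⥤ D} [F.Additive] [G.Additive] [H.Additive]
  (α : F ⟶ G) (β : G ⟶ H)
  (w : ∀ X, α.app X ≫ β.app X = 0)

/-- The short complex of chain complexes obtained by applying a complex of functors
`F ⟶ G ⟶ H` to a chain complex. -/
abbrev mapShortComplex (K : ChainComplex C ℕ) : ShortComplex (ChainComplex D ℕ) where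
  X₁ := (F.mapHomologicalComplex _).obj K
  X₂ := (G.mapHomologicalComplex _).obj K
  X₃ := (H.mapHomologicalComplex _).obj K
  f := (NatTrans.mapHomologicalComplex α _).app K
  g := (NatTrans.mapHomologicalComplex β _).app K
  zero := by
    ext i
    exact w _

variable (hw : ∀ (X : C) [Projective X], (ShortComplex.mk _ _ (w X)).ShortExact)

include hw in
lemma mapShortComplex_shortExact (K : ChainComplex C ℕ) [∀ i, Projective (K.X i)] :
    (mapShortComplex α β w K).ShortExact :=
  HomologicalComplex.shortExact_of_degreewise_shortExact _ fun i ↦ hw (K.X i)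

/-- The map of short complexes induced by a chain map. -/
abbrev mapShortComplexMap {K L : ChainComplex C ℕ} (φ : K ⟶ L) :
    mapShortComplex α β w K ⟶ mapShortComplex α β w L where
  τ₁ := (F.mapHomologicalComplex _).map φ
  τ₂ := (G.mapHomologicalComplex _).map φ
  τ₃ := (H.mapHomologicalComplex _).map φ
  comm₁₂ := ((NatTrans.mapHomologicalComplex α _).naturality φ)
  comm₂₃ := ((NatTrans.mapHomologicalComplex β _).naturality φ)

variable [HasProjectiveResolutions C]

/-- The value of a left derived functor, as the homology of a projective resolution. -/
noncomputable def leftDerivedIso (F : C ⥤ D) [F.Additive] (n : ℕ) (X : C) :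
    (F.leftDerived n).obj X ≅
      ((F.mapHomologicalComplex _).obj (projectiveResolution X).complex).homology n :=
  (projectiveResolution X).isoLeftDerivedObj F n

lemma leftDerived_app_comp_leftDerivedIso (n : ℕ) (X : C) :
    (NatTrans.leftDerived α n).app X ≫ (leftDerivedIso G n X).hom =
      (leftDerivedIso F n X).hom ≫ HomologicalComplex.homologyMap
        ((NatTrans.mapHomologicalComplex α _).app (projectiveResolution X).complex) n := by
  rw [← Iso.eq_comp_inv, Category.assoc]
  exact (projectiveResolution X).leftDerived_app_eq α n

lemma leftDerived_map_comp_leftDerivedIso (F : C ⥤ D) [F.Additive] (n : ℕ) {X Y : C} (f : X ⟶ Y) :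
    (F.leftDerived n).map f ≫ (leftDerivedIso F n Y).hom =
      (leftDerivedIso F n X).hom ≫ HomologicalComplex.homologyMap
        ((F.mapHomologicalComplex _).map (ProjectiveResolution.lift f _ _)) n :=
  ProjectiveResolution.isoLeftDerivedObj_hom_naturality f _ _ _
    (ProjectiveResolution.lift_commutes_zero f _ _) F n

/-- The connecting transformation between left derived functors. -/
noncomputable def leftDerivedδ (n : ℕ) : H.leftDerived (n + 1) ⟶ F.leftDerived n where
  app X := (leftDerivedIso H (n + 1) X).hom ≫
    (mapShortComplex_shortExact α β w hw (projectiveResolution X).complex).δ (n + 1) n (by simp) ≫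
    (leftDerivedIso F n X).inv
  naturality X Y f := by
    have h := HomologicalComplex.HomologySequence.δ_naturality
      (mapShortComplexMap α β w (ProjectiveResolution.lift f _ _))
      (mapShortComplex_shortExact α β w hw (projectiveResolution X).complex)
      (mapShortComplex_shortExact α β w hw (projectiveResolution Y).complex) (n + 1) n (by simp)
    rw [← cancel_mono (leftDerivedIso F n Y).hom, Category.assoc, Category.assoc, Category.assoc,
      Category.assoc, Category.assoc, Category.assoc, Iso.inv_hom_id, Category.comp_id,
      ← Category.assoc, leftDerived_map_comp_leftDerivedIso, leftDerived_map_comp_leftDerivedIso,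
      Iso.inv_hom_id_assoc, h, Category.assoc]

lemma leftDerivedδ_app_comp_leftDerivedIso (n : ℕ) (X : C) :
    (leftDerivedδ α β w hw n).app X ≫ (leftDerivedIso F n X).hom =
      (leftDerivedIso H (n + 1) X).hom ≫ (mapShortComplex_shortExact α β w hw
        (projectiveResolution X).complex).δ (n + 1) n (by simp) := by
  simp [leftDerivedδ]

include w in
lemma leftDerived_zero (n : ℕ) (X : C) :
    (NatTrans.leftDerived α n).app X ≫ (NatTrans.leftDerived β n).app X = 0 := by
  rw [← cancel_mono (leftDerivedIso H n X).hom, Category.assoc,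
    leftDerived_app_comp_leftDerivedIso, ← Category.assoc, leftDerived_app_comp_leftDerivedIso,
    Category.assoc, ← HomologicalComplex.homologyMap_comp,
    (mapShortComplex α β w (projectiveResolution X).complex).zero]
  simp

include hw in
lemma leftDerived_exact₂ (n : ℕ) (X : C) :
    (ShortComplex.mk _ _ (leftDerived_zero α β w n X)).Exact :=
  (ShortComplex.exact_iff_of_iso (ShortComplex.isoMk
    (leftDerivedIso F n X) (leftDerivedIso G n X) (leftDerivedIso H n X)
    (leftDerived_app_comp_leftDerivedIso α n X).symm
    (leftDerived_app_comp_leftDerivedIso β n X).symm)).2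
    ((mapShortComplex_shortExact α β w hw (projectiveResolution X).complex).homology_exact₂ n)

lemma leftDerivedδ_comp (n : ℕ) (X : C) :
    (leftDerivedδ α β w hw n).app X ≫ (NatTrans.leftDerived α n).app X = 0 := by
  rw [← cancel_mono (leftDerivedIso G n X).hom, Category.assoc,
    leftDerived_app_comp_leftDerivedIso, ← Category.assoc, leftDerivedδ_app_comp_leftDerivedIso,
    Category.assoc, (mapShortComplex_shortExact α β w hw
      (projectiveResolution X).complex).δ_comp (n + 1) n (by simp)]
  simp

lemma comp_leftDerivedδ (n : ℕ) (X : C) :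
    (NatTrans.leftDerived β (n + 1)).app X ≫ (leftDerivedδ α β w hw n).app X = 0 := by
  rw [← cancel_mono (leftDerivedIso F n X).hom, Category.assoc,
    leftDerivedδ_app_comp_leftDerivedIso, ← Category.assoc, leftDerived_app_comp_leftDerivedIso,
    Category.assoc, (mapShortComplex_shortExact α β w hw
      (projectiveResolution X).complex).comp_δ (n + 1) n (by simp)]
  simp

lemma leftDerived_exact₁ (n : ℕ) (X : C) :
    (ShortComplex.mk _ _ (leftDerivedδ_comp α β w hw n X)).Exact :=
  (ShortComplex.exact_iff_of_iso (ShortComplex.isoMk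
    (leftDerivedIso H (n + 1) X) (leftDerivedIso F n X) (leftDerivedIso G n X)
    (leftDerivedδ_app_comp_leftDerivedIso α β w hw n X).symm
    (leftDerived_app_comp_leftDerivedIso α n X).symm)).2
    ((mapShortComplex_shortExact α β w hw
      (projectiveResolution X).complex).homology_exact₁ (n + 1) n (by simp))

lemma leftDerived_exact₃ (n : ℕ) (X : C) :
    (ShortComplex.mk _ _ (comp_leftDerivedδ α β w hw n X)).Exact :=
  (ShortComplex.exact_iff_of_iso (ShortComplex.isoMk
    (leftDerivedIso G (n + 1) X) (leftDerivedIso H (n + 1) X) (leftDerivedIso F n X)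
    (leftDerived_app_comp_leftDerivedIso β (n + 1) X).symm
    (leftDerivedδ_app_comp_leftDerivedIso α β w hw n X).symm)).2
    ((mapShortComplex_shortExact α β w hw
      (projectiveResolution X).complex).homology_exact₃ (n + 1) n (by simp))

lemma leftDerived_app_comp_fromLeftDerivedZero (X : C) :
    (NatTrans.leftDerived α 0).app X ≫ G.fromLeftDerivedZero.app X =
      F.fromLeftDerivedZero.app X ≫ α.app X := by
  have key (F : C ⥤ D) [F.Additive] : F.fromLeftDerivedZero.app X = (leftDerivedIso F 0 X).hom ≫
      HomologicalComplex.homologyι _ 0 ≫ (projectiveResolution X).fromLeftDerivedZero' F :=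
    (projectiveResolution X).fromLeftDerivedZero_eq F
  have h : HomologicalComplex.opcyclesMap
      ((NatTrans.mapHomologicalComplex α _).app (projectiveResolution X).complex) 0 ≫
        (projectiveResolution X).fromLeftDerivedZero' G =
      (projectiveResolution X).fromLeftDerivedZero' F ≫ α.app X := by
    rw [← cancel_epi (HomologicalComplex.pOpcycles _ _), ← Category.assoc,
      HomologicalComplex.p_opcyclesMap, Category.assoc,
      ProjectiveResolution.pOpcycles_comp_fromLeftDerivedZero', ← Category.assoc,
      ProjectiveResolution.pOpcycles_comp_fromLeftDerivedZero']
    exact (α.naturality _).symm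
  rw [key, key, ← Category.assoc, leftDerived_app_comp_leftDerivedIso, Category.assoc,
    Category.assoc, Category.assoc, ← h, HomologicalComplex.homologyι_naturality_assoc]

end LeftDerivedSequence

end CategoryTheory.NatTrans

namespace CategoryTheory

section ExtSequence

variable (R : Type*) [CommRing R] {C : Type*} [Category* C] [Abelian C] [Linear R C]

/-- The functor whose left derived functors define `Ext(-, Y)`. -/
abbrev homOp (Y : C) : C ⥤ (ModuleCat R)ᵒᵖ := ((linearYoneda R C).obj Y).rightOp

/-- The transformation induced by a morphism in the second variable. -/
abbrev homOpMap {Y Y' : C} (f : Y ⟶ Y') : homOp R Y' ⟶ homOp R Y :=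
  ((linearYoneda R C).map f).rightOp

lemma homOpMap_zero (S : ShortComplex C) (X : C) :
    (homOpMap R S.g).app X ≫ (homOpMap R S.f).app X = 0 := by
  apply Quiver.Hom.unop_inj
  ext (x : X ⟶ S.X₁)
  change (x ≫ S.f) ≫ S.g = 0
  simp

variable {R} in
lemma homOpMap_shortExact {S : ShortComplex C} (hS : S.ShortExact) (X : C) [Projective X] :
    (ShortComplex.mk _ _ (homOpMap_zero R S X)).ShortExact := by
  have := hS.mono_f
  have := hS.epi_g
  let T : ShortComplex (ModuleCat R) := ShortComplex.mk
    (((linearYoneda R C).map S.f).app (op X)) (((linearYoneda R C).map S.g).app (op X))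
    (by
      ext (x : X ⟶ S.X₁)
      change (x ≫ S.f) ≫ S.g = 0
      simp)
  have hT : T.ShortExact :=
    { exact := by
        rw [ShortComplex.moduleCat_exact_iff]
        intro (x : X ⟶ S.X₂) (hx : x ≫ S.g = 0)
        exact ⟨hS.exact.lift x hx, hS.exact.lift_f x hx⟩
      mono_f := by
        rw [ModuleCat.mono_iff_injective]
        intro (x : X ⟶ S.X₁) (y : X ⟶ S.X₁) (h : x ≫ S.f = y ≫ S.f)
        exact (cancel_mono S.f).1 h
      epi_g := by
        rw [ModuleCat.epi_iff_surjective]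
        intro (x : X ⟶ S.X₃)
        exact ⟨Projective.factorThru x S.g, Projective.factorThru_comp x S.g⟩ }
  exact hT.op

variable [EnoughProjectives C]

/-- The connecting transformation for `Ext` in the second variable. -/
noncomputable def extδ {S : ShortComplex C} (hS : S.ShortExact) (n : ℕ) :
    (Ext R C n).flip.obj S.X₃ ⟶ (Ext R C (n + 1)).flip.obj S.X₁ :=
  NatTrans.leftOp (NatTrans.leftDerivedδ (homOpMap R S.g) (homOpMap R S.f) (homOpMap_zero R S)
    (fun X _ ↦ homOpMap_shortExact hS X) n)

variable {S : ShortComplex C} (hS : S.ShortExact)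

include hS in
lemma ext_exact₂ (n : ℕ) (X : Cᵒᵖ) :
    Function.Exact (((Ext R C n).obj X).map S.f) (((Ext R C n).obj X).map S.g) :=
  (ShortComplex.ShortExact.moduleCat_exact_iff_function_exact _).1
    (NatTrans.leftDerived_exact₂ (homOpMap R S.g) (homOpMap R S.f) (homOpMap_zero R S)
      (fun X _ ↦ homOpMap_shortExact hS X) n X.unop).unop

lemma ext_exact₁ (n : ℕ) (X : Cᵒᵖ) :
    Function.Exact ((extδ R hS n).app X) (((Ext R C (n + 1)).obj X).map S.f) :=
  (ShortComplex.ShortExact.moduleCat_exact_iff_function_exact _).1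
    (NatTrans.leftDerived_exact₃ (homOpMap R S.g) (homOpMap R S.f) (homOpMap_zero R S)
      (fun X _ ↦ homOpMap_shortExact hS X) n X.unop).unop

lemma ext_exact₃ (n : ℕ) (X : Cᵒᵖ) :
    Function.Exact (((Ext R C n).obj X).map S.g) ((extδ R hS n).app X) :=
  (ShortComplex.ShortExact.moduleCat_exact_iff_function_exact _).1
    (NatTrans.leftDerived_exact₁ (homOpMap R S.g) (homOpMap R S.f) (homOpMap_zero R S)
      (fun X _ ↦ homOpMap_shortExact hS X) n X.unop).unop

lemma isZero_ext_succ_of_injective (X Y : C) [Injective Y] (n : ℕ) :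
    IsZero (((Ext R C (n + 1)).obj (op X)).obj Y) := by
  let P := projectiveResolution X
  refine IsZero.of_iso ?_ (P.isoExt (n + 1) Y)
  rw [← HomologicalComplex.exactAt_iff_isZero_homology,
    HomologicalComplex.exactAt_iff' _ n (n + 1) (n + 2) (by simp) (by simp),
    ShortComplex.moduleCat_exact_iff]
  intro (x : P.complex.X (n + 1) ⟶ Y) hx
  have hx' : P.complex.d (n + 2) (n + 1) ≫ x = 0 := hx
  exact ⟨(P.exact_succ n).descToInjective x hx', (P.exact_succ n).comp_descToInjective x hx'⟩

instance (Y : C) : PreservesFiniteColimits (homOp R Y) := by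
  have : PreservesLimits ((linearYoneda R C).obj Y ⋙ forget (ModuleCat R)) :=
    (inferInstance : PreservesLimits (yoneda.obj Y))
  have : PreservesLimits ((linearYoneda R C).obj Y) :=
    preservesLimits_of_reflects_of_preserves _ (forget (ModuleCat R))
  exact preservesFiniteColimits_rightOp _

/-- The canonical transformation from `Hom(-, Y)` to `Ext^0(-, Y)`. -/
noncomputable def homToExtZero (Y : C) : (linearYoneda R C).obj Y ⟶ (Ext R C 0).flip.obj Y :=
  NatTrans.leftOp (homOp R Y).fromLeftDerivedZero

instance (Y : C) (X : Cᵒᵖ) : IsIso ((homToExtZero R Y).app X) :=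
  inferInstanceAs (IsIso ((homOp R Y).fromLeftDerivedZero.app X.unop).unop)

lemma homToExtZero_naturality {Y Y' : C} (f : Y ⟶ Y') (X : Cᵒᵖ) :
    ((linearYoneda R C).map f).app X ≫ (homToExtZero R Y').app X =
      (homToExtZero R Y).app X ≫ ((Ext R C 0).obj X).map f :=
  Quiver.Hom.op_inj
    (NatTrans.leftDerived_app_comp_fromLeftDerivedZero (homOpMap R f) X.unop).symm

end ExtSequence

end CategoryTheory

section FilteredColimit

variable {R : Type u} [CommRing R] {K : Type} [SmallCategory K] [IsFiltered K]

instance : PreservesFilteredColimitsOfSize.{0, 0} (forget (ModuleCat.{u} R)) :=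
  preservesFilteredColimitsOfSize_shrink.{0, u, 0, u} _

lemma ModuleCat.exact_of_isColimit {F₁ F₂ F₃ : K ⥤ ModuleCat.{u} R}
    {c₁ : Cocone F₁} {c₂ : Cocone F₂} {c₃ : Cocone F₃}
    (h₁ : IsColimit c₁) (h₂ : IsColimit c₂) (h₃ : IsColimit c₃)
    (a : F₁ ⟶ F₂) (b : F₂ ⟶ F₃) (f : c₁.pt ⟶ c₂.pt) (g : c₂.pt ⟶ c₃.pt)
    (hf : ∀ k, c₁.ι.app k ≫ f = a.app k ≫ c₂.ι.app k)
    (hg : ∀ k, c₂.ι.app k ≫ g = b.app k ≫ c₃.ι.app k)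
    (hex : ∀ k, Function.Exact (a.app k) (b.app k)) : Function.Exact f g := by
  have hf' (k) (x : F₁.obj k) : f (c₁.ι.app k x) = c₂.ι.app k (a.app k x) :=
    congr($(hf k) x)
  have hg' (k) (x : F₂.obj k) : g (c₂.ι.app k x) = c₃.ι.app k (b.app k x) :=
    congr($(hg k) x)
  intro y
  obtain ⟨k, y, rfl⟩ := Concrete.isColimit_exists_rep _ h₂ y
  constructor
  · intro hy
    rw [hg', ← map_zero (c₃.ι.app k).hom] at hy
    obtain ⟨j, p, q, hpq⟩ := (Concrete.isColimit_rep_eq_iff_exists _ h₃ _ _).1 hy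
    have hb : b.app j (F₂.map p y) = 0 := by
      have := congr($(b.naturality p) y)
      exact this.trans (hpq.trans (map_zero _))
    obtain ⟨x, hx⟩ := (hex j _).1 hb
    refine ⟨c₁.ι.app j x, ?_⟩
    rw [hf', hx]
    exact congr($(c₂.w p) y)
  · rintro ⟨x, hx⟩
    obtain ⟨j, x, rfl⟩ := Concrete.isColimit_exists_rep _ h₁ x
    rw [← hx, hf', hg', (hex j).apply_apply_eq_zero, map_zero]

end FilteredColimit

namespace localCohomology

variable {R : Type u} [CommRing R] (J : Ideal R)

/-- The system of `Ext` modules whose colimit is local cohomology. -/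
noncomputable abbrev extSystem (i : ℕ) (M : ModuleCat.{u} R) : ℕᵒᵖᵒᵖ ⥤ ModuleCat.{u} R :=
  (ringModIdeals (idealPowersDiagram J)).op ⋙ (Ext R (ModuleCat.{u} R) i).flip.obj M

/-- The structural map from `Ext` to local cohomology. -/
noncomputable def fromExt (i : ℕ) (M : ModuleCat.{u} R) (k : ℕᵒᵖᵒᵖ) :
    (extSystem J i M).obj k ⟶ (localCohomology J i).obj M :=
  (colimit.ι (diagram (idealPowersDiagram J) i) k).app M

/-- The local cohomology module, as a cocone over the system of `Ext` modules. -/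
@[simps]
noncomputable def extCocone (i : ℕ) (M : ModuleCat.{u} R) : Cocone (extSystem J i M) where
  pt := (localCohomology J i).obj M
  ι :=
    { app := fromExt J i M
      naturality := fun _ _ f ↦
        congr($((colimit.cocone (diagram (idealPowersDiagram J) i)).ι.naturality f).app M) }

/-- The local cohomology module is the colimit of the system of `Ext` modules. -/
noncomputable def isColimitExtCocone (i : ℕ) (M : ModuleCat.{u} R) :
    IsColimit (extCocone J i M) :=
  isColimitOfPreserves ((evaluation _ _).obj M)
    (colimit.isColimit (diagram (idealPowersDiagram J) i))

lemma fromExt_naturality (i : ℕ) {M N : ModuleCat.{u} R} (f : M ⟶ N) (k : ℕᵒᵖᵒᵖ) :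
    fromExt J i M k ≫ (localCohomology J i).map f =
      ((Ext R (ModuleCat.{u} R) i).flip.map f).app _ ≫ fromExt J i N k :=
  ((colimit.ι (diagram (idealPowersDiagram J) i) k).naturality f).symm

variable {S : ShortComplex (ModuleCat.{u} R)} (hS : S.ShortExact)

include hS in
lemma exact₂ (i : ℕ) :
    Function.Exact ((localCohomology J i).map S.f) ((localCohomology J i).map S.g) :=
  ModuleCat.exact_of_isColimit (isColimitExtCocone J i S.X₁) (isColimitExtCocone J i S.X₂)
    (isColimitExtCocone J i S.X₃) (Functor.whiskerLeft _ ((Ext R _ i).flip.map S.f))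
    (Functor.whiskerLeft _ ((Ext R _ i).flip.map S.g)) _ _ (fromExt_naturality J i S.f)
    (fromExt_naturality J i S.g) (fun _ ↦ ext_exact₂ R hS i _)

/-- The connecting homomorphism in local cohomology. -/
noncomputable def δ (i : ℕ) :
    (localCohomology J i).obj S.X₃ ⟶ (localCohomology J (i + 1)).obj S.X₁ :=
  (isColimitExtCocone J i S.X₃).map (extCocone J (i + 1) S.X₁)
    (Functor.whiskerLeft _ (extδ R hS i))

lemma fromExt_comp_δ (i : ℕ) (k : ℕᵒᵖᵒᵖ) :
    fromExt J i S.X₃ k ≫ δ J hS i = (extδ R hS i).app _ ≫ fromExt J (i + 1) S.X₁ k :=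
  (isColimitExtCocone J i S.X₃).ι_map (extCocone J (i + 1) S.X₁)
    (Functor.whiskerLeft _ (extδ R hS i)) k

lemma exact₃ (i : ℕ) : Function.Exact ((localCohomology J i).map S.g) (δ J hS i) :=
  ModuleCat.exact_of_isColimit (isColimitExtCocone J i S.X₂) (isColimitExtCocone J i S.X₃)
    (isColimitExtCocone J (i + 1) S.X₁) (Functor.whiskerLeft _ ((Ext R _ i).flip.map S.g))
    (Functor.whiskerLeft _ (extδ R hS i)) _ _ (fromExt_naturality J i S.g)
    (fromExt_comp_δ J hS i) (fun _ ↦ ext_exact₃ R hS i _)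

lemma exact₁ (i : ℕ) : Function.Exact (δ J hS i) ((localCohomology J (i + 1)).map S.f) :=
  ModuleCat.exact_of_isColimit (isColimitExtCocone J i S.X₃) (isColimitExtCocone J (i + 1) S.X₁)
    (isColimitExtCocone J (i + 1) S.X₂) (Functor.whiskerLeft _ (extδ R hS i))
    (Functor.whiskerLeft _ ((Ext R _ (i + 1)).flip.map S.f)) _ _
    (fromExt_comp_δ J hS i) (fromExt_naturality J (i + 1) S.f) (fun _ ↦ ext_exact₁ R hS i _)

lemma subsingleton_of_injective (i : ℕ) (hi : i ≠ 0) (E : ModuleCat.{u} R) [Injective E] :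
    Subsingleton ((localCohomology J i).obj E) := by
  obtain ⟨i, rfl⟩ := Nat.exists_eq_succ_of_ne_zero hi
  refine subsingleton_of_forall_eq 0 fun x ↦ ?_
  obtain ⟨k, x, rfl⟩ := Concrete.isColimit_exists_rep _ (isColimitExtCocone J (i + 1) E) x
  have := ModuleCat.subsingleton_of_isZero (isZero_ext_succ_of_injective R
    ((ringModIdeals (idealPowersDiagram J)).obj k.unop) E i)
  exact (congrArg _ (Subsingleton.elim (α := ((Ext R (ModuleCat.{u} R) (i + 1)).obj
    (op ((ringModIdeals (idealPowersDiagram J)).obj k.unop))).obj E) x 0)).trans (map_zero _)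

end localCohomology

/-- The submodule of elements annihilated by some power of `J`. -/
def Submodule.powTorsion {R : Type*} [CommRing R] (J : Ideal R) (M : Type*) [AddCommGroup M]
    [Module R M] : Submodule R M where
  carrier := {x | ∃ n, ∀ a ∈ J ^ n, a • x = 0}
  zero_mem' := ⟨0, by simp⟩
  add_mem' := by
    rintro x y ⟨m, hm⟩ ⟨n, hn⟩
    refine ⟨max m n, fun a ha ↦ ?_⟩
    rw [smul_add, hm a (Ideal.pow_le_pow_right (le_max_left m n) ha),
      hn a (Ideal.pow_le_pow_right (le_max_right m n) ha), add_zero]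
  smul_mem' := by
    rintro r x ⟨n, hn⟩
    exact ⟨n, fun a ha ↦ by rw [smul_comm, hn a ha, smul_zero]⟩

lemma Submodule.mem_powTorsion {R : Type*} [CommRing R] {J : Ideal R} {M : Type*}
    [AddCommGroup M] [Module R M] {x : M} :
    x ∈ powTorsion J M ↔ ∃ n, ∀ a ∈ J ^ n, a • x = 0 := Iff.rfl

lemma Submodule.mem_powTorsion_add {R : Type*} [CommRing R] {I J : Ideal R} {M : Type*}
    [AddCommGroup M] [Module R M] {x : M} :
    x ∈ powTorsion (I + J) M ↔ x ∈ powTorsion I M ∧ x ∈ powTorsion J M := by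
  constructor
  · rintro ⟨n, hn⟩
    exact ⟨⟨n, fun a ha ↦ hn a (Ideal.pow_right_mono le_sup_left n ha)⟩,
      ⟨n, fun a ha ↦ hn a (Ideal.pow_right_mono le_sup_right n ha)⟩⟩
  · rintro ⟨⟨m, hm⟩, ⟨n, hn⟩⟩
    refine ⟨m + n, fun a ha ↦ ?_⟩
    obtain ⟨b, hb, c, hc, rfl⟩ := Submodule.mem_sup.1 (Ideal.sup_pow_add_le_pow_sup_pow ha)
    rw [add_smul, hm b hb, hn c hc, add_zero]

/-- Over a Noetherian ring, the torsion submodule of an injective module is injective. -/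
lemma Submodule.injective_powTorsion {R : Type u} [CommRing R] [IsNoetherianRing R] (I : Ideal R)
    (E : Type u) [AddCommGroup E] [Module R E] [Module.Injective R E] :
    Module.Injective R (powTorsion I E) := by
  refine Module.Baer.injective fun 𝔞 g ↦ ?_
  obtain ⟨n, hn⟩ : ∃ n, ∀ b ∈ I ^ n, ∀ x : 𝔞, b • g x = 0 := by
    obtain ⟨s, hs⟩ := (inferInstance : Module.Finite R 𝔞).fg_top
    choose N hN using fun x : 𝔞 ↦ (g x).2
    refine ⟨s.sup N, fun b hb x ↦ ?_⟩
    have hx : x ∈ Submodule.span R (s : Set 𝔞) := hs ▸ Submodule.mem_top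
    induction hx using Submodule.span_induction with
    | mem x hx =>
      exact Subtype.ext (hN x b (Ideal.pow_le_pow_right (Finset.le_sup hx) hb))
    | zero => simp
    | add x y _ _ hx hy => rw [map_add, smul_add, hx, hy, add_zero]
    | smul r x _ hx => rw [map_smul, smul_comm, hx, smul_zero]
  obtain ⟨k, hk⟩ := Ideal.exists_pow_inf_eq_pow_smul I (𝔞 : Submodule R R)
  have hker (x : 𝔞) (hx : (x : R) ∈ I ^ (n + k)) : g x = 0 := by
    have h₁ : (x : R) ∈ I ^ n • (𝔞 : Submodule R R) := by
      have h₂ : (x : R) ∈ I ^ (n + k) • (⊤ : Submodule R R) ⊓ 𝔞 :=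
        ⟨by simpa using hx, x.2⟩
      rw [hk _ (Nat.le_add_left k n), Nat.add_sub_cancel] at h₂
      exact (Submodule.smul_mono le_rfl inf_le_right) h₂
    have h₃ : ∀ y ∈ I ^ n • (𝔞 : Submodule R R), ∃ hy : y ∈ 𝔞, g ⟨y, hy⟩ = 0 := by
      intro y hy
      induction hy using Submodule.smul_induction_on' with
      | smul r hr y hy =>
        exact ⟨𝔞.smul_mem r hy, (g.map_smul r ⟨y, hy⟩).trans (hn r hr _)⟩
      | add y _ z _ hy hz =>
        obtain ⟨hy, hy'⟩ := hy
        obtain ⟨hz, hz'⟩ := hz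
        exact ⟨add_mem hy hz, (g.map_add ⟨y, hy⟩ ⟨z, hz⟩).trans (by rw [hy', hz', add_zero])⟩
    exact (h₃ x h₁).2
  let 𝔟 : Submodule R 𝔞 := Submodule.comap 𝔞.subtype (I ^ (n + k))
  let i : (𝔞 ⧸ 𝔟) →ₗ[R] R ⧸ I ^ (n + k) := Submodule.mapQ 𝔟 _ 𝔞.subtype le_rfl
  have hi : Function.Injective i := by
    rw [← LinearMap.ker_eq_bot, Submodule.ker_mapQ]
    simp [𝔟]
  let h : (𝔞 ⧸ 𝔟) →ₗ[R] E := 𝔟.liftQ ((powTorsion I E).subtype ∘ₗ g)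
    (fun x hx ↦ by simp [hker x hx])
  obtain ⟨φ, hφ⟩ := Module.Injective.out i hi h
  have hφ' (x : R) (hx : x ∈ 𝔞) : φ (Submodule.Quotient.mk x) = g ⟨x, hx⟩ :=
    hφ (Submodule.Quotient.mk ⟨x, hx⟩)
  let ψ : R →ₗ[R] powTorsion I E := LinearMap.codRestrict _ (φ ∘ₗ Submodule.mkQ _) (fun x ↦ by
    refine ⟨n + k, fun a ha ↦ ?_⟩
    have hax : (Submodule.Quotient.mk (a • x) : R ⧸ I ^ (n + k)) = 0 :=
      (Submodule.Quotient.mk_eq_zero _).2 (Ideal.mul_mem_right x _ ha)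
    rw [LinearMap.comp_apply, ← map_smul, ← map_smul, Submodule.mkQ_apply, hax, map_zero])
  exact ⟨ψ, fun x hx ↦ Subtype.ext (hφ' x hx)⟩

namespace localCohomology

variable {R : Type u} [CommRing R] (J : Ideal R)

/-- Evaluation at `1` of a homomorphism on a quotient of the ring. -/
noncomputable def evalOne (M : ModuleCat.{u} R) (k : ℕᵒᵖᵒᵖ) :
    ((linearYoneda R (ModuleCat.{u} R)).obj M).obj
      (op ((ringModIdeals (idealPowersDiagram J)).obj k.unop)) ⟶ M :=
  ModuleCat.ofHom
    { toFun := fun (φ : ModuleCat.of R (R ⧸ J ^ k.unop.unop) ⟶ M) ↦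
        φ.hom (Submodule.Quotient.mk 1)
      map_add' := fun _ _ ↦ rfl
      map_smul' := fun _ _ ↦ rfl }

lemma evalOne_injective (M : ModuleCat.{u} R) (k : ℕᵒᵖᵒᵖ) :
    Function.Injective (evalOne J M k) := by
  intro (φ : ModuleCat.of R (R ⧸ J ^ k.unop.unop) ⟶ M) ψ h
  apply ModuleCat.hom_ext
  apply Submodule.linearMap_qext
  exact LinearMap.ext_ring h

lemma exists_evalOne_eq {M : ModuleCat.{u} R} {x : M} {n : ℕ} (hx : ∀ a ∈ J ^ n, a • x = 0) :
    ∃ φ, evalOne J M (op (op n)) φ = x :=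
  ⟨ModuleCat.ofHom (Submodule.liftQ (J ^ n) (LinearMap.toSpanSingleton R M x) hx),
    one_smul R x⟩

lemma smul_evalOne {M : ModuleCat.{u} R} {k : ℕᵒᵖᵒᵖ} (φ) {a : R} (ha : a ∈ J ^ k.unop.unop) :
    a • evalOne J M k φ = 0 := by
  let φ' : ModuleCat.of R (R ⧸ J ^ k.unop.unop) ⟶ M := φ
  change a • φ'.hom (Submodule.Quotient.mk 1) = 0
  rw [← map_smul, ← Submodule.Quotient.mk_smul, (Submodule.Quotient.mk_eq_zero _).2, map_zero]
  simpa using ha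

/-- The canonical isomorphism from `Hom(-, M)` to `Ext^0(-, M)`. -/
noncomputable def homIsoExtZero (M : ModuleCat.{u} R) :
    (linearYoneda R (ModuleCat.{u} R)).obj M ≅ (Ext R (ModuleCat.{u} R) 0).flip.obj M :=
  NatIso.ofComponents (fun X ↦ asIso ((homToExtZero R M).app X))
    (fun f ↦ (homToExtZero R M).naturality f)

/-- The map to `M` from the system of modules `Ext^0(R/J^n, M)`. -/
noncomputable def evalCocone (M : ModuleCat.{u} R) : Cocone (extSystem J 0 M) where
  pt := M
  ι :=
    { app := fun k ↦
        (homIsoExtZero M).inv.app ((ringModIdeals (idealPowersDiagram J)).op.obj k) ≫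
          evalOne J M k
      naturality := fun k l f ↦ by
        have h := (homIsoExtZero M).inv.naturality
          ((ringModIdeals (idealPowersDiagram J)).op.map f)
        refine ((reassoc_of% h) (evalOne J M l)).trans ?_
        rfl }

/-- The canonical map to `M` from its zeroth local cohomology. -/
noncomputable def zeroι (M : ModuleCat.{u} R) : (localCohomology J 0).obj M ⟶ M :=
  (isColimitExtCocone J 0 M).desc (evalCocone J M)

lemma homToExtZero_fromExt_zeroι (M : ModuleCat.{u} R) (k : ℕᵒᵖᵒᵖ) :
    (homToExtZero R M).app _ ≫ fromExt J 0 M k ≫ zeroι J M = evalOne J M k := by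
  have : fromExt J 0 M k ≫ zeroι J M = (homIsoExtZero M).inv.app
      ((ringModIdeals (idealPowersDiagram J)).op.obj k) ≫ evalOne J M k :=
    (isColimitExtCocone J 0 M).fac (evalCocone J M) k
  rw [this]
  exact Iso.hom_inv_id_app_assoc (homIsoExtZero M) _ _

lemma exists_zero_rep {M : ModuleCat.{u} R} (x : (localCohomology J 0).obj M) :
    ∃ k φ, x = fromExt J 0 M k ((homToExtZero R M).app _ φ) := by
  obtain ⟨k, y, rfl⟩ := Concrete.isColimit_exists_rep _ (isColimitExtCocone J 0 M) x
  obtain ⟨φ, rfl⟩ := (ConcreteCategory.bijective_of_isIso ((homToExtZero R M).app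
    (op ((ringModIdeals (idealPowersDiagram J)).obj k.unop)))).2 y
  exact ⟨k, φ, rfl⟩

lemma zeroι_apply {M : ModuleCat.{u} R} (k : ℕᵒᵖᵒᵖ) (φ) :
    zeroι J M (fromExt J 0 M k ((homToExtZero R M).app _ φ)) = evalOne J M k φ :=
  congr($(homToExtZero_fromExt_zeroι J M k) φ)

lemma zeroι_injective (M : ModuleCat.{u} R) : Function.Injective (zeroι J M) := by
  refine (injective_iff_map_eq_zero (zeroι J M).hom).2 fun x hx ↦ ?_
  obtain ⟨k, φ, rfl⟩ := exists_zero_rep J x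
  have hφ : φ = 0 := evalOne_injective J M k
    (((zeroι_apply J k φ).symm.trans hx).trans (map_zero (evalOne J M k).hom).symm)
  rw [hφ, map_zero, map_zero]

lemma mem_range_zeroι {M : ModuleCat.{u} R} {x : M} :
    x ∈ Set.range (zeroι J M) ↔ x ∈ Submodule.powTorsion J M := by
  constructor
  · rintro ⟨x, rfl⟩
    obtain ⟨k, φ, rfl⟩ := exists_zero_rep J x
    refine ⟨k.unop.unop, fun a ha ↦ ?_⟩
    rw [zeroι_apply, smul_evalOne J φ ha]
  · rintro ⟨n, hn⟩
    obtain ⟨φ, rfl⟩ := exists_evalOne_eq J hn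
    exact ⟨_, zeroι_apply J _ φ⟩

lemma zeroι_naturality {M N : ModuleCat.{u} R} (f : M ⟶ N) :
    (localCohomology J 0).map f ≫ zeroι J N = zeroι J M ≫ f := by
  ext x
  obtain ⟨k, φ, rfl⟩ := exists_zero_rep J x
  have h₁ := congr($(fromExt_naturality J 0 f k) ((homToExtZero R M).app _ φ))
  have h₂ := congr($(homToExtZero_naturality R f
    (op ((ringModIdeals (idealPowersDiagram J)).obj k.unop))) φ)
  change (zeroι J N) ((localCohomology J 0).map f _) = f (zeroι J M _)
  rw [zeroι_apply]
  refine (congrArg (zeroι J N) (h₁.trans (congrArg (fromExt J 0 N k) h₂.symm))).trans ?_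
  exact zeroι_apply J k _

end localCohomology

/-- A class of modules closed under submodules, quotients and extensions. -/
structure ModuleCat.IsSerre {R : Type u} [CommRing R] (P : ModuleCat.{u} R → Prop) : Prop where
  sub : ∀ (A B : ModuleCat.{u} R) (f : A ⟶ B), Function.Injective f → P B → P A
  quot : ∀ (A B : ModuleCat.{u} R) (f : A ⟶ B), Function.Surjective f → P A → P B
  ext : ∀ (A B C : ModuleCat.{u} R) (f : A ⟶ B) (g : B ⟶ C),
    Function.Injective f → Function.Surjective g → Function.Exact f g → P A → P C → P B

namespace ModuleCat.IsSerre

variable {R : Type u} [CommRing R] {P : ModuleCat.{u} R → Prop} (hP : IsSerre P)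

include hP

lemma of_iso {A B : ModuleCat.{u} R} (e : A ≅ B) (hA : P A) : P B :=
  hP.quot A B e.hom (ConcreteCategory.bijective_of_isIso e.hom).2 hA

lemma of_subsingleton {A B : ModuleCat.{u} R} [Subsingleton A] (hB : P B) : P A :=
  hP.sub A B 0 (Function.injective_of_subsingleton _) hB

lemma of_exact {A B C : ModuleCat.{u} R} {f : A ⟶ B} {g : B ⟶ C} (h : Function.Exact f g)
    (hA : P A) (hC : P C) : P B := by
  refine hP.ext (of R (LinearMap.range f.hom)) B (of R (LinearMap.range g.hom))
    (ofHom (LinearMap.range f.hom).subtype) (ofHom g.hom.rangeRestrict)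
    (Submodule.injective_subtype _) g.hom.surjective_rangeRestrict (fun x ↦ ?_)
    (hP.quot A _ (ofHom f.hom.rangeRestrict) f.hom.surjective_rangeRestrict hA)
    (hP.sub _ C (ofHom (LinearMap.range g.hom).subtype) (Submodule.injective_subtype _) hC)
  refine Subtype.ext_iff.trans ((h x).trans ?_)
  exact ⟨fun ⟨y, hy⟩ ↦ ⟨⟨x, y, hy⟩, rfl⟩, fun ⟨y, hy⟩ ↦ hy ▸ y.2⟩

lemma of_ker_le {A B C : ModuleCat.{u} R} (f : A ⟶ B) (g : A ⟶ C) (hg : Function.Surjective g)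
    (h : ∀ x, f x = 0 → g x = 0) (hB : P B) : P C := by
  refine hP.quot (of R (A ⧸ LinearMap.ker f.hom)) C (ofHom (Submodule.liftQ _ g.hom h))
    (fun y ↦ ?_) (hP.sub _ B (ofHom (Submodule.liftQ _ f.hom le_rfl)) ?_ hB)
  · obtain ⟨x, rfl⟩ := hg y
    exact ⟨Submodule.Quotient.mk x, rfl⟩
  · exact LinearMap.ker_eq_bot.1 (Submodule.ker_liftQ_eq_bot' _ _ rfl)

lemma of_exact_of_exact {X Y Z Y' Z' W : ModuleCat.{u} R} {a : X ⟶ Y} {y : Y ⟶ Y'} {b : Y ⟶ Z}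
    {z : Z ⟶ Z'} (hy : Function.Exact a y) (hz : Function.Exact b z) (hY' : P Y') (hZ' : P Z')
    (w : Z ⟶ W) (hw : Function.Surjective w) (h : ∀ x, w (b (a x)) = 0) : P W := by
  let K := LinearMap.range (b ≫ w).hom
  refine hP.ext (of R K) W (of R (W ⧸ K)) (ofHom K.subtype) (ofHom K.mkQ)
    (Submodule.injective_subtype _) K.mkQ_surjective (LinearMap.exact_subtype_mkQ K) ?_ ?_
  · refine hP.of_ker_le y (ofHom (b ≫ w).hom.rangeRestrict)
      (b ≫ w).hom.surjective_rangeRestrict (fun v hv ↦ ?_) hY'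
    obtain ⟨x, rfl⟩ := (hy v).1 hv
    exact Subtype.ext (h x)
  · refine hP.of_ker_le z (w ≫ ofHom K.mkQ) (K.mkQ_surjective.comp hw) (fun v hv ↦ ?_) hZ'
    obtain ⟨x, rfl⟩ := (hz v).1 hv
    exact (Submodule.Quotient.mk_eq_zero K).2 ⟨x, rfl⟩

end ModuleCat.IsSerre

lemma ModuleCat.shortExact_of_function {R : Type u} [CommRing R] {A B C : ModuleCat.{u} R}
    {f : A ⟶ B} {g : B ⟶ C} (hf : Function.Injective f) (hg : Function.Surjective g)
    (h : Function.Exact f g) (w : f ≫ g = 0) : (ShortComplex.mk f g w).ShortExact where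
  exact := (ShortComplex.ShortExact.moduleCat_exact_iff_function_exact _).2 h
  mono_f := (ModuleCat.mono_iff_injective f).2 hf
  epi_g := (ModuleCat.epi_iff_surjective g).2 hg

namespace localCohomology

variable {R : Type u} [CommRing R]

lemma subsingleton_of_subsingleton (J : Ideal R) (i : ℕ) (M : ModuleCat.{u} R) [Subsingleton M] :
    Subsingleton ((localCohomology J i).obj M) := by
  by_cases hi : i = 0
  · subst hi
    exact (zeroι_injective J M).subsingleton
  · have : Injective M := (ModuleCat.isZero_of_subsingleton M).injective
    exact subsingleton_of_injective J i hi M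

lemma injective_zero [IsNoetherianRing R] (I : Ideal R) (E : ModuleCat.{u} R) [Injective E] :
    Injective ((localCohomology I 0).obj E) := by
  have : Module.Injective R E := (Module.injective_iff_injective_object R E).2 ‹_›
  have : Module.Injective R (Submodule.powTorsion I E) := Submodule.injective_powTorsion I E
  have hr : LinearMap.range (zeroι I E).hom = Submodule.powTorsion I E :=
    SetLike.ext fun _ ↦ mem_range_zeroι I
  have : Injective (ModuleCat.of R (Submodule.powTorsion I E)) :=
    Module.injective_object_of_injective_module _ _
  exact Injective.of_iso ((LinearEquiv.ofInjective (zeroι I E).hom (zeroι_injective I E)).trans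
    (LinearEquiv.ofEq _ _ hr)).toModuleIso.symm this

lemma map_zero_injective (I : Ideal R) {M N : ModuleCat.{u} R} (f : M ⟶ N)
    (hf : Function.Injective f) : Function.Injective ((localCohomology I 0).map f) := by
  have h : ⇑(zeroι I N) ∘ ⇑((localCohomology I 0).map f) = ⇑f ∘ ⇑(zeroι I M) :=
    funext fun x ↦ congr($(zeroι_naturality I f) x)
  exact .of_comp (h ▸ hf.comp (zeroι_injective I M))

section

variable {S : ShortComplex (ModuleCat.{u} R)} (hS : S.ShortExact) (I J : Ideal R)

lemma δ_surjective (i : ℕ) [Subsingleton ((localCohomology J (i + 1)).obj S.X₂)] :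
    Function.Surjective (δ J hS i) :=
  fun x ↦ (exact₁ J hS i x).1 (Subsingleton.elim _ _)

lemma δ_injective (i : ℕ) [Subsingleton ((localCohomology J i).obj S.X₂)] :
    Function.Injective (δ J hS i) := by
  refine (injective_iff_map_eq_zero (δ J hS i).hom).2 fun x hx ↦ ?_
  obtain ⟨y, rfl⟩ := (exact₃ J hS i x).1 hx
  rw [Subsingleton.elim y 0, map_zero]

include hS in
lemma nonempty_iso_of_injective (i : ℕ) (hi : i ≠ 0) [Injective S.X₂] :
    Nonempty ((localCohomology J (i + 1)).obj S.X₁ ≅ (localCohomology J i).obj S.X₃) := by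
  have := subsingleton_of_injective J i hi S.X₂
  have := subsingleton_of_injective J (i + 1) i.succ_ne_zero S.X₂
  exact ⟨(LinearEquiv.ofBijective (δ J hS i).hom
    ⟨δ_injective hS J i, δ_surjective hS J i⟩).toModuleIso.symm⟩

variable (S) in
/-- The image of `H^0_I(X₂) ⟶ H^0_I(X₃)`. -/
noncomputable abbrev zeroImage : ModuleCat.{u} R :=
  ModuleCat.of R (LinearMap.range ((localCohomology I 0).map S.g).hom)

variable (S) in
/-- The projection onto the image of `H^0_I(X₂) ⟶ H^0_I(X₃)`. -/
noncomputable abbrev toZeroImage : (localCohomology I 0).obj S.X₂ ⟶ zeroImage S I :=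
  ModuleCat.ofHom ((localCohomology I 0).map S.g).hom.rangeRestrict

variable (S) in
/-- The inclusion of the image of `H^0_I(X₂) ⟶ H^0_I(X₃)`. -/
noncomputable abbrev zeroImageι : zeroImage S I ⟶ (localCohomology I 0).obj S.X₃ :=
  ModuleCat.ofHom (Submodule.subtype _)

include hS in
lemma exact_toZeroImage :
    Function.Exact ((localCohomology I 0).map S.f) (toZeroImage S I) :=
  fun x ↦ Subtype.ext_iff.trans (exact₂ I hS 0 x)

lemma exact_zeroImageι : Function.Exact (zeroImageι S I) (δ I hS 0) :=
  fun x ↦ (exact₃ I hS 0 x).trans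
    ⟨fun ⟨y, hy⟩ ↦ ⟨⟨x, y, hy⟩, rfl⟩, fun ⟨y, hy⟩ ↦ hy ▸ y.2⟩

include hS in
lemma shortExact_toZeroImage : ∃ w, (ShortComplex.mk ((localCohomology I 0).map S.f)
    (toZeroImage S I) w).ShortExact := by
  have h := exact_toZeroImage hS I
  exact ⟨ModuleCat.hom_ext (LinearMap.ext h.apply_apply_eq_zero),
    ModuleCat.shortExact_of_function
      (map_zero_injective I S.f ((ModuleCat.mono_iff_injective S.f).1 hS.mono_f))
      (LinearMap.surjective_rangeRestrict _) h _⟩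

lemma shortExact_zeroImageι [Injective S.X₂] :
    ∃ w, (ShortComplex.mk (zeroImageι S I) (δ I hS 0) w).ShortExact := by
  have := subsingleton_of_injective I 1 one_ne_zero S.X₂
  have h := exact_zeroImageι hS I
  exact ⟨ModuleCat.hom_ext (LinearMap.ext h.apply_apply_eq_zero),
    ModuleCat.shortExact_of_function (Submodule.injective_subtype _) (δ_surjective hS I 0) h _⟩

lemma exists_zero_zero_to_add (M : ModuleCat.{u} R) :
    ∃ ψ : (localCohomology J 0).obj ((localCohomology I 0).obj M) ⟶
      (localCohomology (I + J) 0).obj M,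
      Function.Surjective ψ ∧ ∀ x, zeroι (I + J) M (ψ x) = zeroι I M (zeroι J _ x) := by
  have hmem (x) : zeroι I M (zeroι J _ x) ∈ LinearMap.range (zeroι (I + J) M).hom := by
    refine (mem_range_zeroι (I + J)).2 (Submodule.mem_powTorsion_add.2
      ⟨(mem_range_zeroι I).1 ⟨_, rfl⟩, ?_⟩)
    obtain ⟨n, hn⟩ := (mem_range_zeroι J).1 ⟨x, rfl⟩
    exact ⟨n, fun a ha ↦ by rw [← map_smul, hn a ha, map_zero]⟩
  let e := LinearEquiv.ofInjective (zeroι (I + J) M).hom (zeroι_injective (I + J) M)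
  let ψ := ModuleCat.ofHom (e.symm.toLinearMap ∘ₗ
    LinearMap.codRestrict _ ((zeroι I M).hom ∘ₗ (zeroι J _).hom) hmem)
  have hψ (x) : zeroι (I + J) M (ψ x) = zeroι I M (zeroι J _ x) :=
    congrArg Subtype.val (e.apply_symm_apply _)
  refine ⟨ψ, fun y ↦ ?_, hψ⟩
  obtain ⟨h₁, n, hn⟩ := Submodule.mem_powTorsion_add.1 ((mem_range_zeroι (I + J)).1 ⟨y, rfl⟩)
  obtain ⟨z, hz⟩ := (mem_range_zeroι I).2 h₁
  obtain ⟨x, rfl⟩ := (mem_range_zeroι J (x := z)).2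
    ⟨n, fun a ha ↦ zeroι_injective I M (by rw [map_smul, hz, hn a ha, map_zero])⟩
  exact ⟨x, zeroι_injective (I + J) M ((hψ x).trans hz)⟩

variable [IsNoetherianRing R] {P : ModuleCat.{u} R → Prop} (hP : ModuleCat.IsSerre P)

include hS hP

lemma mem_zero_of_mem [Injective S.X₂] {p : ℕ} (hp : p ≠ 0)
    (h₀ : P ((localCohomology J (p + 1)).obj ((localCohomology I 0).obj S.X₁)))
    (h₁ : P ((localCohomology J p).obj ((localCohomology I 1).obj S.X₁))) :
    P ((localCohomology J p).obj ((localCohomology I 0).obj S.X₃)) := by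
  obtain ⟨_, hS₁⟩ := shortExact_toZeroImage hS I
  obtain ⟨_, hS₂⟩ := shortExact_zeroImageι hS I
  have := injective_zero I S.X₂
  have := subsingleton_of_injective J p hp ((localCohomology I 0).obj S.X₂)
  exact hP.of_exact (exact₂ J hS₂ p) (hP.sub _ _ (δ J hS₁ p) (δ_injective hS₁ J p) h₀) h₁

omit [IsNoetherianRing R] in
lemma mem_one_of_mem [Injective S.X₂]
    (h₀ : P ((localCohomology J 1).obj ((localCohomology I 0).obj S.X₁)))
    (h₁ : P ((localCohomology J 0).obj ((localCohomology I 1).obj S.X₁))) :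
    P ((localCohomology (I + J) 1).obj S.X₁) := by
  obtain ⟨_, hS₁⟩ := shortExact_toZeroImage hS I
  obtain ⟨_, hS₂⟩ := shortExact_zeroImageι hS I
  obtain ⟨ψ₂, -, hψ₂⟩ := exists_zero_zero_to_add I J S.X₂
  obtain ⟨ψ₃, hs, hψ₃⟩ := exists_zero_zero_to_add I J S.X₃
  have := subsingleton_of_injective (I + J) 1 one_ne_zero S.X₂
  refine hP.of_exact_of_exact (exact₃ J hS₁ 0) (exact₂ J hS₂ 0) h₀ h₁ (ψ₃ ≫ δ (I + J) hS 0)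
    ((δ_surjective hS (I + J) 0).comp hs) fun x ↦ ?_
  have hnat {K : Ideal R} {M N : ModuleCat.{u} R} (f : M ⟶ N) (x) :
      zeroι K N ((localCohomology K 0).map f x) = f (zeroι K M x) :=
    congr($(zeroι_naturality K f) x)
  refine (exact₃ (I + J) hS 0 _).2 ⟨ψ₂ x, zeroι_injective (I + J) S.X₃ ?_⟩
  have hx := (hnat (zeroImageι S I) _).trans (congrArg (zeroImageι S I) (hnat (toZeroImage S I) x))
  rw [hnat, hψ₂]
  exact (hnat S.g _).symm.trans ((congrArg (zeroι I S.X₃) hx).symm.trans (hψ₃ _).symm)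

end

/-- The short exact sequence embedding a module into an injective one. -/
noncomputable abbrev embedding (M : ModuleCat.{u} R) : ShortComplex (ModuleCat.{u} R) :=
  ShortComplex.mk (Injective.ι M) (cokernel.π (Injective.ι M)) (cokernel.condition _)

lemma embedding_shortExact (M : ModuleCat.{u} R) : (embedding M).ShortExact where
  exact := ShortComplex.exact_cokernel _

/-- The cosyzygies of a module. -/
noncomputable def cosyzygy (M : ModuleCat.{u} R) : ℕ → ModuleCat.{u} R
  | 0 => M
  | k + 1 => (embedding (cosyzygy M k)).X₃

lemma nonempty_iso_cosyzygy (J : Ideal R) (M : ModuleCat.{u} R) (k i : ℕ) (hi : i ≠ 0) :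
    Nonempty ((localCohomology J (k + i)).obj M ≅ (localCohomology J i).obj (cosyzygy M k)) := by
  induction k generalizing i with
  | zero => exact ⟨(Functor.mapIso _ (Iso.refl _)).trans (eqToIso (by rw [zero_add]; rfl))⟩
  | succ k ih =>
    obtain ⟨e⟩ := ih (i + 1) i.succ_ne_zero
    obtain ⟨e'⟩ := nonempty_iso_of_injective (embedding_shortExact (cosyzygy M k)) J i hi
    exact ⟨(eqToIso (by rw [add_right_comm, add_assoc])).trans (e.trans e')⟩

lemma mem_add_of_mem [IsNoetherianRing R] {P : ModuleCat.{u} R → Prop}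
    (hP : ModuleCat.IsSerre P) (I J : Ideal R) (M : ModuleCat.{u} R) (n : ℕ) (hn : n ≠ 0)
    (h : ∀ p q, p + q = n → P ((localCohomology J p).obj ((localCohomology I q).obj M))) :
    P ((localCohomology (I + J) n).obj M) := by
  obtain ⟨m, rfl⟩ := Nat.exists_eq_succ_of_ne_zero hn
  have h₁ (p k : ℕ) (hpk : p + k = m) :
      P ((localCohomology J p).obj ((localCohomology I 1).obj (cosyzygy M k))) := by
    obtain ⟨e⟩ := nonempty_iso_cosyzygy I M k 1 one_ne_zero
    exact hP.of_iso (Functor.mapIso _ e) (h p (k + 1) (by lia))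
  have h₀ (p k : ℕ) (hpk : p + k = m) :
      P ((localCohomology J (p + 1)).obj ((localCohomology I 0).obj (cosyzygy M k))) := by
    induction k generalizing p with
    | zero => exact h (p + 1) 0 (by lia)
    | succ k ih =>
      exact mem_zero_of_mem (embedding_shortExact (cosyzygy M k)) I J hP p.succ_ne_zero
        (ih (p + 1) (by lia)) (h₁ (p + 1) k (by lia))
  obtain ⟨e⟩ := nonempty_iso_cosyzygy (I + J) M m 1 one_ne_zero
  exact hP.of_iso e.symm (mem_one_of_mem (embedding_shortExact (cosyzygy M m)) I J hP
    (h₀ 0 m (zero_add m)) (h₁ 0 m (zero_add m)))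

end localCohomology

lemma subsingleton_localCohomology_of_cohomologicalDimension_lt {R : Type u} [CommRing R]
    {I : Ideal R} {M : ModuleCat.{u} R} {q : ℕ} (h : cohomologicalDimension I M < q) :
    Subsingleton ((localCohomology I q).obj M) := by
  by_contra hq
  exact h.not_ge (le_sSup ⟨q, rfl, not_subsingleton_iff_nontrivial.1 hq⟩)

/-- let `S` be a Serre subcategory of the category of `R`-modules (a class of
modules closed under submodules, quotients and extensions).  If `c = cd(I,M)`,
`H^{t+i}_J(H^{c-i}_I(M)) ∈ S` for all `0 < i ≤ c`, and `H^{t+c}_{I+J}(M) ∉ S` for a positive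
integer `t`, then `H^t_J(H^c_I(M)) ∉ S`. -/
theorem top_localCohomology_not_mem_serre_class
    (R : Type u) [CommRing R] [IsNoetherianRing R] (M : ModuleCat.{u} R)
    (S : ModuleCat.{u} R → Prop)
    (hsub : ∀ (A B : ModuleCat.{u} R) (f : A ⟶ B), Function.Injective f → S B → S A)
    (hquot : ∀ (A B : ModuleCat.{u} R) (f : A ⟶ B), Function.Surjective f → S A → S B)
    (hext : ∀ (A B C : ModuleCat.{u} R) (f : A ⟶ B) (g : B ⟶ C),
      Function.Injective f → Function.Surjective g → Function.Exact f g →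
        S A → S C → S B)
    (I J : Ideal R) (c : ℕ) (hc : cohomologicalDimension I M = (c : ℕ∞))
    (t : ℕ) (ht : 0 < t)
    (hmem : ∀ i, 0 < i → i ≤ c →
      S ((localCohomology J (t + i)).obj ((localCohomology I (c - i)).obj M)))
    (hnmem : ¬ S ((localCohomology (I + J) (t + c)).obj M)) :
    ¬ S ((localCohomology J t).obj ((localCohomology I c).obj M)) := by
  intro hS
  have hP : ModuleCat.IsSerre S := ⟨hsub, hquot, hext⟩
  refine hnmem (localCohomology.mem_add_of_mem hP I J M (t + c) (by lia) fun p q hpq ↦ ?_)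
  rcases lt_trichotomy q c with hq | rfl | hq
  · have h := hmem (c - q) (by lia) (by lia)
    rwa [show t + (c - q) = p by lia, show c - (c - q) = q by lia] at h
  · rwa [show p = t by lia]
  · have := subsingleton_localCohomology_of_cohomologicalDimension_lt
      (hc.trans_lt (Nat.cast_lt.2 hq))
    have := localCohomology.subsingleton_of_subsingleton J p ((localCohomology I q).obj M)
    exact hP.of_subsingleton hS
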